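/- Let ν ∈ ℝ and let q : ℝ → ℝ be a twice-differentiable solution of the inhomogeneous Painlevé II equation q''(x) = x·q(x) + 2q(x)³ − ν, with Hamiltonian u(x) = q'(x)² − x·q(x)² − q(x)⁴ + 2ν·q(x). For s, τ ∈ ℝ set x = 2^{2/3}(2s − τ²) and define d = 2^{−1/3}·q(x), c = −2^{−1/3}·u(x) + s², b = −2^{−2/3}·q'(x) + cd + τd, h = −2^{−2/3}·q'(x) + cd − τd, f = 2τ²d + 2^{1/3}·c·q'(x) − c²d − d³ − 2sd + ν, and σ = −c² + d² + s. Then the matrices U(ζ, s, τ) = [[−c+τ, d+ν/ζ, i, 0], [−d+ν/ζ, c−τ, 0, i], [−i(−ζ+σ+s), −i(b+h), c+τ, d−ν/ζ], [−i(b+h), −i(ζ+σ+s), −d−ν/ζ, −c−τ]] and W(ζ, s, τ) = [[ζ, −2b, 0, −2id], [−2b, −ζ, 2id, 0], [0, −2if, ζ, −2h], [2if, 0, −2h, −ζ]] satisfy the zero-curvature equation ∂U/∂τ = ∂W/∂ζ + W·U − U·W for all ζ ∈ ℂ∖{0} and all s, τ ∈ ℝ. -/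

import Mathlib

/-!
Write `P = 2^{-2/3} q'(x)`. Along the flow in `τ` (where `∂x/∂τ = -2·2^{2/3} τ`), the identity
`u' = -q²` and the Painlevé II equation become the polynomial system
`∂d = -4τP`, `∂c = -4τd²`, `∂P = -2τ(2(2s - τ²)d + 4d³ - ν)`
(`hasDerivAt_pd`, `hasDerivAt_pc`, `hasDerivAt_pP`), in which the cube roots of two have
disappeared. Substituting these derivatives, each of the sixteen entries of the zero-curvature
equation (`zero_curvature_algebra`) is a polynomial identity in `c, d, P, s, τ, ν, ζ, ζ⁻¹`
and `i`, with `i² = -1`.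
-/

open Complex Matrix Filter Asymptotics Topology Bornology

noncomputable section

attribute [local instance] Matrix.normedAddCommGroup Matrix.normedSpace

/-- 4×4 complex matrices. -/
abbrev Mat4 := Matrix (Fin 4) (Fin 4) ℂ

namespace Tacnode

/-- `e^{νπi}`. -/
def eπ (ν : ℝ) : ℂ := Complex.exp ((ν : ℂ) * (Real.pi : ℂ) * Complex.I)

/-- The angles of the ten rays `Γ₀,…,Γ₉`. -/
def rayAngle (φ₁ φ₂ : ℝ) : Fin 10 → ℝ :=
  ![0, φ₁, φ₂, Real.pi - φ₂, Real.pi - φ₁, Real.pi,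
    Real.pi + φ₁, Real.pi + φ₂, 2 * Real.pi - φ₂, 2 * Real.pi - φ₁]

/-- The open ray `e^{iφ}·(0,∞)`. -/
def ray (φ : ℝ) : Set ℂ := {z | ∃ t : ℝ, 0 < t ∧ z = (t : ℂ) * Complex.exp ((φ : ℂ) * Complex.I)}

/-- The ray `Γ_k`. -/
def Γ (φ₁ φ₂ : ℝ) (k : Fin 10) : Set ℂ := ray (rayAngle φ₁ φ₂ k)

/-- The union of the ten rays. -/
def raysUnion (φ₁ φ₂ : ℝ) : Set ℂ := ⋃ k : Fin 10, Γ φ₁ φ₂ k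

/-- The open sector of arguments strictly between `α` and `β`. -/
def sector (α β : ℝ) : Set ℂ :=
  {z | ∃ t : ℝ, 0 < t ∧ ∃ φ : ℝ, α < φ ∧ φ < β ∧ z = (t : ℂ) * Complex.exp ((φ : ℂ) * Complex.I)}

/-- The open sector `Ω_k` between `Γ_k` and `Γ_{k+1}` (with `Γ₁₀ = Γ₀` at angle `2π`). -/
def Ω (φ₁ φ₂ : ℝ) (k : Fin 10) : Set ℂ :=
  sector (rayAngle φ₁ φ₂ k) (if k = 9 then 2 * Real.pi else rayAngle φ₁ φ₂ (k + 1))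

/-- The jump matrix `J_k` on the ray `Γ_k`. -/
def J (ν : ℝ) : Fin 10 → Mat4 :=
  ![!![0, 0, 1, 0; 0, 1, 0, 0; -1, 0, 0, 0; 0, 0, 0, 1],
    !![1, 0, 0, 0; 0, 1, 0, 0; 1, 0, 1, 0; 0, 0, 0, 1],
    !![1, 0, 0, 0; -eπ ν, 1, 0, 0; 0, 0, 1, eπ ν; 0, 0, 0, 1],
    !![1, eπ (-ν), 0, 0; 0, 1, 0, 0; 0, 0, 1, 0; 0, 0, -eπ (-ν), 1],
    !![1, 0, 0, 0; 0, 1, 0, 0; 0, 0, 1, 0; 0, -1, 0, 1],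
    !![1, 0, 0, 0; 0, 0, 0, -1; 0, 0, 1, 0; 0, 1, 0, 0],
    !![1, 0, 0, 0; 0, 1, 0, 0; 0, 0, 1, 0; 0, -1, 0, 1],
    !![1, -eπ ν, 0, 0; 0, 1, 0, 0; 0, 0, 1, 0; 0, 0, eπ ν, 1],
    !![1, 0, 0, 0; eπ (-ν), 1, 0, 0; 0, 0, 1, -eπ (-ν); 0, 0, 0, 1],
    !![1, 0, 0, 0; 0, 1, 0, 0; 1, 0, 1, 0; 0, 0, 0, 1]]

/-- The (+)-side (left side) of the oriented ray with angle `φ`. -/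
def plusSide (φ : ℝ) : Set ℂ := {z | 0 < (z * Complex.exp (-(φ : ℂ) * Complex.I)).im}

/-- The (−)-side (right side) of the oriented ray with angle `φ`. -/
def minusSide (φ : ℝ) : Set ℂ := {z | (z * Complex.exp (-(φ : ℂ) * Complex.I)).im < 0}

/-- The constant matrix `A` in the asymptotics at infinity. -/
def Amix : Mat4 := (Real.sqrt 2 : ℂ)⁻¹ •
  !![1, 0, -Complex.I, 0; 0, 1, 0, Complex.I; -Complex.I, 0, 1, 0; 0, Complex.I, 0, 1]

/-- `θ₁(ζ) = (2/3)·r₁·(−ζ)^{3/2} + 2s·(−ζ)^{1/2}` (principal branches). -/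
def θ₁ (r₁ s ζ : ℂ) : ℂ := 2 / 3 * r₁ * (-ζ) ^ (3 / 2 : ℂ) + 2 * s * (-ζ) ^ (1 / 2 : ℂ)

/-- `θ₂(ζ) = (2/3)·r₂·ζ^{3/2} + 2s·ζ^{1/2}` (principal branches). -/
def θ₂ (r₂ s ζ : ℂ) : ℂ := 2 / 3 * r₂ * ζ ^ (3 / 2 : ℂ) + 2 * s * ζ ^ (1 / 2 : ℂ)

/-- The full (invertible) prefactor describing the behavior of `M` at infinity. -/
def Dinf (r₁ r₂ s τ ζ : ℂ) : Mat4 :=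
  Matrix.diagonal ![(-ζ) ^ (-(1 / 4) : ℂ), ζ ^ (-(1 / 4) : ℂ), (-ζ) ^ ((1 / 4) : ℂ),
      ζ ^ ((1 / 4) : ℂ)] * Amix *
    Matrix.diagonal ![Complex.exp (-θ₁ r₁ s ζ + τ * ζ), Complex.exp (-θ₂ r₂ s ζ - τ * ζ),
      Complex.exp (θ₁ r₁ s ζ + τ * ζ), Complex.exp (θ₂ r₂ s ζ - τ * ζ)]

/-- `M`, together with the coefficients `M₁, M₂` of its expansion at infinity, solves the
model Riemann–Hilbert problem with parameters `ν, r₁, r₂, s, τ` and angles `φ₁, φ₂`. -/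
def IsRHSolution (ν : ℝ) (r₁ r₂ s τ : ℂ) (φ₁ φ₂ : ℝ) (M : ℂ → Mat4) (M₁ M₂ : Mat4) : Prop :=
  -- (1) analyticity off the ten rays
  DifferentiableOn ℂ M (raysUnion φ₁ φ₂)ᶜ ∧
  -- (2) boundary values and jump relations
  (∀ k : Fin 10, ∀ ζ ∈ Γ φ₁ φ₂ k, ∃ Mp Mm : Mat4,
    Tendsto M (𝓝[plusSide (rayAngle φ₁ φ₂ k)] ζ) (𝓝 Mp) ∧
    Tendsto M (𝓝[minusSide (rayAngle φ₁ φ₂ k)] ζ) (𝓝 Mm) ∧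
    Mp = Mm * J ν k) ∧
  -- (3) asymptotics at infinity
  (∀ i j : Fin 4,
    (fun ζ : ℂ => (M ζ * (Dinf r₁ r₂ s τ ζ)⁻¹ - ((1 : Mat4) + ζ⁻¹ • M₁ + (ζ⁻¹) ^ 2 • M₂)) i j)
      =O[cobounded ℂ] fun ζ : ℂ => ‖ζ‖⁻¹ ^ 3) ∧
  -- (4) behavior at the origin, case ν ≤ 0
  (ν ≤ 0 →
    (∀ i j : Fin 4, (fun ζ : ℂ => M ζ i j)
        =O[𝓝[(raysUnion φ₁ φ₂ ∪ {0})ᶜ] 0] fun ζ : ℂ => ‖ζ‖ ^ ν) ∧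
    (∀ i j : Fin 4, (fun ζ : ℂ => (M ζ)⁻¹ i j)
        =O[𝓝[(raysUnion φ₁ φ₂ ∪ {0})ᶜ] 0] fun ζ : ℂ => ‖ζ‖ ^ ν)) ∧
  -- (4) behavior at the origin, case ν ≥ 0
  (0 ≤ ν →
    (∀ i j : Fin 4, (fun ζ : ℂ =>
        (M ζ * Matrix.diagonal ![ζ ^ (-(ν : ℂ)), ζ ^ (ν : ℂ), ζ ^ (ν : ℂ), ζ ^ (-(ν : ℂ))]) i j)
        =O[𝓝[Ω φ₁ φ₂ 1 ∪ Ω φ₁ φ₂ 8] 0] fun _ : ℂ => (1 : ℝ)) ∧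
    (∀ i j : Fin 4, (fun ζ : ℂ =>
        (M ζ * Matrix.diagonal ![ζ ^ (ν : ℂ), ζ ^ (-(ν : ℂ)), ζ ^ (-(ν : ℂ)), ζ ^ (ν : ℂ)]) i j)
        =O[𝓝[Ω φ₁ φ₂ 3 ∪ Ω φ₁ φ₂ 6] 0] fun _ : ℂ => (1 : ℝ)) ∧
    (∀ i j : Fin 4, (fun ζ : ℂ => M ζ i j)
        =O[𝓝[Ω φ₁ φ₂ 0 ∪ Ω φ₁ φ₂ 2 ∪ Ω φ₁ φ₂ 4 ∪ Ω φ₁ φ₂ 5 ∪ Ω φ₁ φ₂ 7 ∪ Ω φ₁ φ₂ 9] 0]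
        fun ζ : ℂ => ‖ζ‖ ^ (-ν)))

/-- The symmetric shape of the residue matrix `M₁`, with real parameters. -/
def residueForm (a b c d e f g h : ℝ) : Mat4 :=
  !![(a : ℂ), (b : ℂ), Complex.I * c, Complex.I * d;
     -(b : ℂ), -(a : ℂ), Complex.I * d, Complex.I * c;
     Complex.I * e, Complex.I * f, -(g : ℂ), (h : ℂ);
     Complex.I * f, Complex.I * e, -(h : ℂ), (g : ℂ)]

/-- The Hastings–McLeod solution of the inhomogeneous Painlevé II equation
`q'' = xq + 2q³ − ν`: real, solving the ODE, with `q(x) ~ ν/x` at `+∞` and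
`q(x) ~ √(−x/2)` at `−∞`. -/
def IsHastingsMcLeod (ν : ℝ) (q : ℝ → ℝ) : Prop :=
  (∀ x, DifferentiableAt ℝ q x) ∧ (∀ x, DifferentiableAt ℝ (deriv q) x) ∧
  (∀ x, deriv (deriv q) x = x * q x + 2 * (q x) ^ 3 - ν) ∧
  Tendsto (fun x => x * q x) atTop (𝓝 ν) ∧
  Tendsto (fun x => q x / Real.sqrt (-x / 2)) atBot (𝓝 1)

/-- The Hamiltonian `u(x) = q'(x)² − x·q(x)² − q(x)⁴ + 2ν·q(x)`. -/
def hamiltonian (ν : ℝ) (q : ℝ → ℝ) (x : ℝ) : ℝ :=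
  (deriv q x) ^ 2 - x * (q x) ^ 2 - (q x) ^ 4 + 2 * ν * q x

end Tacnode

namespace Tacnode

/-- The Lax pair matrix `U(ζ)` (coefficient of `∂M/∂ζ = U·M`). -/
def Umat (ν s τ a b c d g h : ℝ) (ζ : ℂ) : Mat4 :=
  !![-(c : ℂ) + (τ : ℂ), (d : ℂ) + (ν : ℂ) / ζ, Complex.I, 0;
     -(d : ℂ) + (ν : ℂ) / ζ, (c : ℂ) - (τ : ℂ), 0, Complex.I;
     -Complex.I * (-ζ + ((g : ℂ) + (a : ℂ) + (s : ℂ))), -Complex.I * ((b : ℂ) + (h : ℂ)),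
       (c : ℂ) + (τ : ℂ), (d : ℂ) - (ν : ℂ) / ζ;
     -Complex.I * ((b : ℂ) + (h : ℂ)), -Complex.I * (ζ + ((g : ℂ) + (a : ℂ) + (s : ℂ))),
       -(d : ℂ) - (ν : ℂ) / ζ, -(c : ℂ) - (τ : ℂ)]

/-- The Lax pair matrix `V(ζ)` (coefficient of `∂M/∂s = V·M`). -/
def Vmat (a b c d g h : ℝ) (ζ : ℂ) : Mat4 :=
  (2 : ℂ) •
  !![(c : ℂ), (d : ℂ), -Complex.I, 0;
     (d : ℂ), (c : ℂ), 0, Complex.I;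
     Complex.I * (-ζ + ((a : ℂ) + (g : ℂ))), Complex.I * ((b : ℂ) - (h : ℂ)),
       -(c : ℂ), -(d : ℂ);
     Complex.I * ((h : ℂ) - (b : ℂ)), -Complex.I * (ζ + ((a : ℂ) + (g : ℂ))),
       -(d : ℂ), -(c : ℂ)]

/-- The Lax pair matrix `W(ζ)` (coefficient of `∂M/∂τ = W·M`). -/
def Wmat (b d f h : ℝ) (ζ : ℂ) : Mat4 :=
  !![ζ, -2 * (b : ℂ), 0, -2 * Complex.I * (d : ℂ);
     -2 * (b : ℂ), -ζ, 2 * Complex.I * (d : ℂ), 0;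
     0, -2 * Complex.I * (f : ℂ), ζ, -2 * (h : ℂ);
     2 * Complex.I * (f : ℂ), 0, -2 * (h : ℂ), -ζ]

end Tacnode

namespace Tacnode

/-- `x = 2^{2/3}(2s − τ²)`. -/
def pX (s τ : ℝ) : ℝ := (2 : ℝ) ^ ((2 : ℝ) / 3) * (2 * s - τ ^ 2)

/-- `d = 2^{−1/3}·q(x)`. -/
def pd (q : ℝ → ℝ) (s τ : ℝ) : ℝ := (2 : ℝ) ^ (-(1 : ℝ) / 3) * q (pX s τ)

/-- `c = −2^{−1/3}·u(x) + s²`. -/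
def pc (ν : ℝ) (q : ℝ → ℝ) (s τ : ℝ) : ℝ :=
  -(2 : ℝ) ^ (-(1 : ℝ) / 3) * hamiltonian ν q (pX s τ) + s ^ 2

/-- `b = −2^{−2/3}·q'(x) + cd + τd`. -/
def pb (ν : ℝ) (q : ℝ → ℝ) (s τ : ℝ) : ℝ :=
  -(2 : ℝ) ^ (-(2 : ℝ) / 3) * deriv q (pX s τ) + pc ν q s τ * pd q s τ + τ * pd q s τ

/-- `h = −2^{−2/3}·q'(x) + cd − τd`. -/
def ph (ν : ℝ) (q : ℝ → ℝ) (s τ : ℝ) : ℝ :=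
  -(2 : ℝ) ^ (-(2 : ℝ) / 3) * deriv q (pX s τ) + pc ν q s τ * pd q s τ - τ * pd q s τ

/-- `f = 2τ²d + 2^{1/3}·c·q'(x) − c²d − d³ − 2sd + ν`. -/
def pf (ν : ℝ) (q : ℝ → ℝ) (s τ : ℝ) : ℝ :=
  2 * τ ^ 2 * pd q s τ + (2 : ℝ) ^ ((1 : ℝ) / 3) * pc ν q s τ * deriv q (pX s τ) -
    (pc ν q s τ) ^ 2 * pd q s τ - (pd q s τ) ^ 3 - 2 * s * pd q s τ + ν

/-- `σ = −c² + d² + s` (this is `g + a`). -/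
def pσ (ν : ℝ) (q : ℝ → ℝ) (s τ : ℝ) : ℝ := -(pc ν q s τ) ^ 2 + (pd q s τ) ^ 2 + s

end Tacnode

namespace Tacnode

/-- `P = 2^{-2/3} q'(x)`, the multiple of `q'` through which `b`, `h` and `f` depend on it. -/
def pP (q : ℝ → ℝ) (s τ : ℝ) : ℝ := (2 : ℝ) ^ (-(2 : ℝ) / 3) * deriv q (pX s τ)

/-- All powers of two in the definitions are powers of a single cube root `k` of two. -/
lemma exists_cbrt_two : ∃ k : ℝ, k ≠ 0 ∧ k ^ 3 = 2 ∧ (2 : ℝ) ^ ((1 : ℝ) / 3) = k ∧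
    (2 : ℝ) ^ ((2 : ℝ) / 3) = k ^ 2 ∧ (2 : ℝ) ^ (-(1 : ℝ) / 3) = k ^ 2 / 2 ∧
    (2 : ℝ) ^ (-(2 : ℝ) / 3) = k / 2 := by
  have h2 : (0 : ℝ) < 2 := by norm_num
  refine ⟨(2 : ℝ) ^ ((1 : ℝ) / 3), by positivity, ?_, rfl, ?_, ?_, ?_⟩
  · rw [← Real.rpow_natCast, ← Real.rpow_mul h2.le]; norm_num
  · rw [← Real.rpow_natCast, ← Real.rpow_mul h2.le]; norm_num
  · rw [← Real.rpow_natCast, ← Real.rpow_mul h2.le, ← Real.rpow_sub_one h2.ne']; norm_num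
  · rw [← Real.rpow_sub_one h2.ne']; norm_num

lemma pb_eq (ν : ℝ) (q : ℝ → ℝ) (s τ : ℝ) :
    pb ν q s τ = -pP q s τ + pc ν q s τ * pd q s τ + τ * pd q s τ := by
  unfold pb pP; ring

lemma ph_eq (ν : ℝ) (q : ℝ → ℝ) (s τ : ℝ) :
    ph ν q s τ = -pP q s τ + pc ν q s τ * pd q s τ - τ * pd q s τ := by
  unfold ph pP; ring

lemma pf_eq (ν : ℝ) (q : ℝ → ℝ) (s τ : ℝ) :
    pf ν q s τ = 2 * τ ^ 2 * pd q s τ + 2 * pc ν q s τ * pP q s τ -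
      (pc ν q s τ) ^ 2 * pd q s τ - (pd q s τ) ^ 3 - 2 * s * pd q s τ + ν := by
  obtain ⟨k, -, -, h1, -, -, h4⟩ := exists_cbrt_two
  unfold pf pP
  rw [h1, h4]; ring

lemma hasDerivAt_pX (s τ : ℝ) :
    HasDerivAt (fun t => pX s t) (-(2 * (2 : ℝ) ^ ((2 : ℝ) / 3) * τ)) τ := by
  have h := (((hasDerivAt_id' τ).fun_pow 2).const_sub (2 * s)).const_mul
    ((2 : ℝ) ^ ((2 : ℝ) / 3))
  refine h.congr_deriv ?_
  push_cast; ring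

lemma hasDerivAt_pd {q : ℝ → ℝ} (hq1 : ∀ x, DifferentiableAt ℝ q x) (s τ : ℝ) :
    HasDerivAt (fun t => pd q s t) (-4 * τ * pP q s τ) τ := by
  obtain ⟨k, -, hk, -, h2, h3, h4⟩ := exists_cbrt_two
  have h := ((hq1 (pX s τ)).hasDerivAt.comp τ (hasDerivAt_pX s τ)).const_mul
    ((2 : ℝ) ^ (-(1 : ℝ) / 3))
  refine h.congr_deriv ?_
  unfold pP
  rw [h2, h3, h4]
  linear_combination (-k * τ * deriv q (pX s τ)) * hk

/-- The Hamiltonian identity `u' = -q²`. -/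
lemma hasDerivAt_hamiltonian {ν : ℝ} {q : ℝ → ℝ}
    (hq1 : ∀ x, DifferentiableAt ℝ q x) (hq2 : ∀ x, DifferentiableAt ℝ (deriv q) x)
    (hq : ∀ x, deriv (deriv q) x = x * q x + 2 * (q x) ^ 3 - ν) (x : ℝ) :
    HasDerivAt (hamiltonian ν q) (-(q x) ^ 2) x := by
  have h := ((((hq2 x).hasDerivAt.pow 2).sub
    ((hasDerivAt_id x).mul ((hq1 x).hasDerivAt.pow 2))).sub ((hq1 x).hasDerivAt.pow 4)).add
    ((hq1 x).hasDerivAt.const_mul (2 * ν))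
  refine h.congr_deriv ?_
  simp [hq]; ring

lemma hasDerivAt_pc {ν : ℝ} {q : ℝ → ℝ}
    (hq1 : ∀ x, DifferentiableAt ℝ q x) (hq2 : ∀ x, DifferentiableAt ℝ (deriv q) x)
    (hq : ∀ x, deriv (deriv q) x = x * q x + 2 * (q x) ^ 3 - ν) (s τ : ℝ) :
    HasDerivAt (fun t => pc ν q s t) (-4 * τ * pd q s τ ^ 2) τ := by
  obtain ⟨k, -, hk, -, h2, h3, -⟩ := exists_cbrt_two
  have h := (((hasDerivAt_hamiltonian hq1 hq2 hq (pX s τ)).comp τ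
    (hasDerivAt_pX s τ)).const_mul (-(2 : ℝ) ^ (-(1 : ℝ) / 3))).add_const (s ^ 2)
  refine h.congr_deriv ?_
  unfold pd
  rw [h2, h3]
  ring

lemma hasDerivAt_pP {ν : ℝ} {q : ℝ → ℝ}
    (hq2 : ∀ x, DifferentiableAt ℝ (deriv q) x)
    (hq : ∀ x, deriv (deriv q) x = x * q x + 2 * (q x) ^ 3 - ν) (s τ : ℝ) :
    HasDerivAt (fun t => pP q s t)
      (-2 * τ * (2 * (2 * s - τ ^ 2) * pd q s τ + 4 * pd q s τ ^ 3 - ν)) τ := by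
  obtain ⟨k, -, hk, -, h2, h3, h4⟩ := exists_cbrt_two
  have h := ((hq2 (pX s τ)).hasDerivAt.comp τ (hasDerivAt_pX s τ)).const_mul
    ((2 : ℝ) ^ (-(2 : ℝ) / 3))
  refine h.congr_deriv ?_
  rw [hq]
  unfold pd
  have hX : pX s τ = k ^ 2 * (2 * s - τ ^ 2) := by rw [pX, h2]
  rw [h2, h3, h4]
  generalize q (pX s τ) = Q
  rw [hX]
  linear_combination
    (-τ * k ^ 2 * (2 * s - τ ^ 2) * Q - 2 * τ * Q ^ 3 + τ * ν + τ * Q ^ 3 * (k ^ 3 + 2)) * hk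

/-- Matrix-valued functions are differentiated entry by entry. -/
lemma hasDerivAt_mat4 {𝕜 : Type*} [NontriviallyNormedField 𝕜] [NormedAlgebra 𝕜 ℂ]
    {A : 𝕜 → Mat4} {A' : Mat4} {t : 𝕜}
    (h : ∀ i j, HasDerivAt (fun x => A x i j) (A' i j) t) : HasDerivAt A A' t :=
  hasDerivAt_pi.2 fun i => hasDerivAt_pi.2 fun j => h i j

lemma deriv_Wmat (b d f h : ℝ) (ζ : ℂ) :
    deriv (fun z : ℂ => Wmat b d f h z) ζ = Matrix.diagonal ![1, -1, 1, -1] := by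
  refine (hasDerivAt_mat4 fun i j => ?_).deriv
  fin_cases i <;> fin_cases j <;>
    simp [Wmat, hasDerivAt_const, hasDerivAt_id', (hasDerivAt_id' ζ).fun_neg]

/-- The `τ`-derivative of `U` along differentiable entries: `ζ`, `ν` and `s` are constant, so the
derivative is linear in the derivatives of the entries. -/
lemma hasDerivAt_Umat (ν s : ℝ) (ζ : ℂ) {a b c d h : ℝ → ℝ} {a' b' c' d' h' τ : ℝ}
    (ha : HasDerivAt a a' τ) (hb : HasDerivAt b b' τ) (hc : HasDerivAt c c' τ)
    (hd : HasDerivAt d d' τ) (hh : HasDerivAt h h' τ) :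
    HasDerivAt (fun t : ℝ => Umat ν s t (a t) (b t) (c t) (d t) 0 (h t) ζ)
      !![-(c' : ℂ) + 1, (d' : ℂ), 0, 0;
         -(d' : ℂ), (c' : ℂ) - 1, 0, 0;
         -Complex.I * (a' : ℂ), -Complex.I * ((b' : ℂ) + (h' : ℂ)), (c' : ℂ) + 1, (d' : ℂ);
         -Complex.I * ((b' : ℂ) + (h' : ℂ)), -Complex.I * (a' : ℂ), -(d' : ℂ),
           -(c' : ℂ) - 1] τ := by
  have ha := ha.ofReal_comp
  have hb := hb.ofReal_comp
  have hc := hc.ofReal_comp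
  have hd := hd.ofReal_comp
  have hh := hh.ofReal_comp
  have ht : HasDerivAt (fun t : ℝ => (t : ℂ)) 1 τ := by
    simpa using (hasDerivAt_id τ).ofReal_comp
  have hbh := (hb.fun_add hh).const_mul (-Complex.I)
  have hσ := ((ha.const_add (((0 : ℝ) : ℂ))).add_const (s : ℂ))
  refine hasDerivAt_mat4 fun i j => ?_
  fin_cases i <;> fin_cases j
  · exact hc.fun_neg.fun_add ht
  · exact hd.add_const _
  · exact hasDerivAt_const _ _
  · exact hasDerivAt_const _ _
  · exact hd.fun_neg.add_const _
  · exact hc.fun_sub ht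
  · exact hasDerivAt_const _ _
  · exact hasDerivAt_const _ _
  · exact (hσ.const_add (-ζ)).const_mul (-Complex.I)
  · exact hbh
  · exact hc.fun_add ht
  · exact hd.sub_const _
  · exact hbh
  · exact (hσ.const_add ζ).const_mul (-Complex.I)
  · exact hd.fun_neg.sub_const _
  · exact hc.fun_neg.fun_sub ht

set_option maxHeartbeats 1000000 in
-- sixteen polynomial identities are normalised in one declaration
/-- The zero-curvature equation with the derivatives of `d`, `c` and `P` already substituted:
a purely algebraic identity. Here `a'` and `e'` stand for the derivatives of `σ` and `b + h`. -/
lemma zero_curvature_algebra (ν s τ c d P : ℝ) {ζ : ℂ} (hζ : ζ ≠ 0) :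
    let b : ℝ := -P + c * d + τ * d
    let h : ℝ := -P + c * d - τ * d
    let f : ℝ := 2 * τ ^ 2 * d + 2 * c * P - c ^ 2 * d - d ^ 3 - 2 * s * d + ν
    let U : Mat4 := Umat ν s τ (-c ^ 2 + d ^ 2 + s) b c d 0 h ζ
    let W : Mat4 := Wmat b d f h ζ
    let c' : ℂ := -4 * τ * d ^ 2
    let d' : ℂ := -4 * τ * P
    let P' : ℂ := -2 * τ * (2 * (2 * s - τ ^ 2) * d + 4 * d ^ 3 - ν)
    let a' : ℂ := -2 * c * c' + 2 * d * d'
    let e' : ℂ := 2 * (-P' + c' * d + c * d')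
    !![-c' + 1, d', 0, 0;
       -d', c' - 1, 0, 0;
       -Complex.I * a', -Complex.I * e', c' + 1, d';
       -Complex.I * e', -Complex.I * a', -d', -c' - 1] =
      Matrix.diagonal ![1, -1, 1, -1] + W * U - U * W := by
  intro b h f U W c' d' P' a' e'
  have hI : Complex.I ^ 2 = -1 := Complex.I_sq
  ext i j
  fin_cases i <;> fin_cases j <;>
    simp [U, W, b, h, f, c', d', P', a', e', Umat, Wmat] <;> field_simp <;>
    ring_nf <;> simp only [hI] <;> ring1

end Tacnode

open Tacnode in
/-- If `q` solves the inhomogeneous Painlevé II equation with parameter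
`ν` and the entries `d, c, b, h, f, σ` are built from `q` and its Hamiltonian as in the
context, then the Lax matrices `U` and `W` satisfy the zero-curvature equation
`∂U/∂τ = ∂W/∂ζ + W·U − U·W` for all `ζ ≠ 0` and all real `s, τ`. -/
theorem tacnode_zero_curvature_tau
    (ν : ℝ) (q : ℝ → ℝ)
    (hq1 : ∀ x, DifferentiableAt ℝ q x) (hq2 : ∀ x, DifferentiableAt ℝ (deriv q) x)
    (hq : ∀ x, deriv (deriv q) x = x * q x + 2 * (q x) ^ 3 - ν) :
    ∀ s τ : ℝ, ∀ ζ : ℂ, ζ ≠ 0 →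
      deriv (fun τ' : ℝ =>
          Umat ν s τ' (pσ ν q s τ') (pb ν q s τ') (pc ν q s τ') (pd q s τ') 0
            (ph ν q s τ') ζ) τ =
        deriv (fun ζ' : ℂ =>
          Wmat (pb ν q s τ) (pd q s τ) (pf ν q s τ) (ph ν q s τ) ζ') ζ +
        Wmat (pb ν q s τ) (pd q s τ) (pf ν q s τ) (ph ν q s τ) ζ *
          Umat ν s τ (pσ ν q s τ) (pb ν q s τ) (pc ν q s τ) (pd q s τ) 0 (ph ν q s τ) ζ -
        Umat ν s τ (pσ ν q s τ) (pb ν q s τ) (pc ν q s τ) (pd q s τ) 0 (ph ν q s τ) ζ *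
          Wmat (pb ν q s τ) (pd q s τ) (pf ν q s τ) (ph ν q s τ) ζ := by
  intro s τ ζ hζ
  have hd := hasDerivAt_pd hq1 s τ
  have hc := hasDerivAt_pc hq1 hq2 hq s τ
  have hP := hasDerivAt_pP hq2 hq s τ
  have hτd := (hasDerivAt_id' τ).fun_mul hd
  have hb := (hP.fun_neg.fun_add (hc.fun_mul hd)).fun_add hτd
  have hh := (hP.fun_neg.fun_add (hc.fun_mul hd)).fun_sub hτd
  have hσ : HasDerivAt (fun t => pσ ν q s t) _ τ :=
    ((hc.fun_pow 2).fun_neg.fun_add (hd.fun_pow 2)).add_const s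
  simp only [← pb_eq] at hb
  simp only [← ph_eq] at hh
  refine (hasDerivAt_Umat ν s ζ hσ hb hc hd hh).deriv.trans ?_
  rw [deriv_Wmat, pb_eq, ph_eq, pf_eq, pσ]
  generalize pd q s τ = d
  generalize pc ν q s τ = c
  generalize pP q s τ = P
  refine Eq.trans ?_ (zero_curvature_algebra ν s τ c d P hζ)
  push_cast
  ring_nf
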